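/- If the normal form S* contains two distinct pairs that share the same worker or share the same firm, then the digraph D(S*) contains a directed cycle. -/

import Mathlib

/-- `(w,f)` blocks the matching `μ`: `f ≻_w μ(w)` and `w ≻_f μ⁻¹(f)`.
`prefW w f f'` means worker `w` strictly prefers firm `f` to firm `f'`;
`prefF f w w'` means firm `f` strictly prefers worker `w` to worker `w'`. -/
def Blocks {W F : Type*} (prefW : W → F → F → Prop) (prefF : F → W → W → Prop)
    (μ : W ≃ F) (w : W) (f : F) : Prop :=
  prefW w f (μ w) ∧ prefF f w (μ.symm f)

/-- A matching is stable if no pair blocks it. -/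
def IsStableMatching {W F : Type*} (prefW : W → F → F → Prop)
    (prefF : F → W → W → Prop) (μ : W ≃ F) : Prop :=
  ∀ w f, ¬ Blocks prefW prefF μ w f

/-- A pair `(w,f)` is unattractive in `S`. -/
def Unattractive {W F : Type*} (prefW : W → F → F → Prop) (prefF : F → W → W → Prop)
    (S : Set (W × F)) (w : W) (f : F) : Prop :=
  (∃ f', (w, f') ∈ S ∧ prefW w f' f ∧
      ∀ w', w' ≠ w → (w', f') ∈ S → prefF f' w w') ∨
  (∃ w', (w', f) ∈ S ∧ prefF f w' w ∧
      ∀ f'', f'' ≠ f → (w', f'') ∈ S → prefW w' f f'')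

/-- `delta S` is `S` with all pairs unattractive in `S` removed. -/
def delta {W F : Type*} (prefW : W → F → F → Prop) (prefF : F → W → W → Prop)
    (S : Set (W × F)) : Set (W × F) :=
  {p ∈ S | ¬ Unattractive prefW prefF S p.1 p.2}

/-- The normal form: the fixed point of `delta` reached by iterating from `W × F`.
Since `delta S ⊆ S` and `W × F` is finite, `Fintype.card (W × F)` iterations suffice. -/
def NormalForm (W F : Type*) [Fintype W] [Fintype F]
    (prefW : W → F → F → Prop) (prefF : F → W → W → Prop) : Set (W × F) :=
  (delta prefW prefF)^[Fintype.card (W × F)] Set.univ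

/-- `μ` is `S`-stable: `S`-admissible and no pair of `S` blocks it within `S`. -/
def SStable {W F : Type*} (prefW : W → F → F → Prop) (prefF : F → W → W → Prop)
    (S : Set (W × F)) (μ : W ≃ F) : Prop :=
  (∀ w, (w, μ w) ∈ S) ∧
  ∀ w f, (w, f) ∈ S → ¬ (prefW w f (μ w) ∧ prefF f w (μ.symm f))

/-- Arcs of the matching digraph `D(S)`: from `(w,f)` to `(w,f')` whenever `f' ≻_w f`,
and from `(w,f)` to `(w',f)` whenever `w' ≻_f w`. -/
def Arc {W F : Type*} (prefW : W → F → F → Prop) (prefF : F → W → W → Prop)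
    (S : Set (W × F)) (p q : W × F) : Prop :=
  p ∈ S ∧ q ∈ S ∧
    ((p.1 = q.1 ∧ prefW p.1 q.2 p.2) ∨ (p.2 = q.2 ∧ prefF p.2 q.1 p.1))

/-- `D(S)` contains a directed cycle: distinct vertices `c 0, …, c (n-1)` with `n ≥ 1`,
`c n = c 0`, and an arc from each vertex to the next. -/
def HasDirectedCycle {W F : Type*} (prefW : W → F → F → Prop)
    (prefF : F → W → W → Prop) (S : Set (W × F)) : Prop :=
  ∃ (n : ℕ) (c : Fin (n + 1) → W × F), 0 < n ∧
    Function.Injective (fun i : Fin n => c i.castSucc) ∧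
    c (Fin.last n) = c 0 ∧
    ∀ i : Fin n, Arc prefW prefF S (c i.castSucc) (c i.succ)

/-- The preference lists possess a cycle: there are `k ≥ 2`, distinct workers
`w_1, …, w_k` and distinct firms `f_1, …, f_k` (indexed by `ZMod k`) with
`f_{j+1} ≻_{w_j} f_j` and `w_j ≻_{f_j} w_{j-1}` for all `j`, indices modulo `k`. -/
def PrefCycle {W F : Type*} (prefW : W → F → F → Prop)
    (prefF : F → W → W → Prop) : Prop :=
  ∃ k : ℕ, 2 ≤ k ∧ ∃ (ws : ZMod k → W) (fs : ZMod k → F),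
    Function.Injective ws ∧ Function.Injective fs ∧
    ∀ j : ZMod k, prefW (ws j) (fs (j + 1)) (fs j) ∧ prefF (fs j) (ws j) (ws (j - 1))

/-!
The normal form is a fixed point of `delta`, so none of its pairs is unattractive. If there is an
arc from `(w, f)` to `(w, f')`, then `(w, f')` is not a sink: otherwise `f'` would rank `w` first
among its remaining workers, making `(w, f)` unattractive. The same holds with workers and firms
exchanged, so a vertex with an incoming arc also has an outgoing one, and following arcs through
the finite vertex set must eventually close a cycle.
-/

section Iteration

open Function

variable {α : Type*}

theorem isFixedPt_iterate_of_ncard_le {T : Set α → Set α} (hT : ∀ S, T S ⊆ S) {n : ℕ}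
    {S : Set α} (hS : S.Finite) (hn : S.ncard ≤ n) : IsFixedPt T (T^[n] S) := by
  induction n generalizing S with
  | zero =>
    obtain rfl : S = ∅ := (Set.ncard_eq_zero hS).mp (Nat.le_zero.mp hn)
    exact Set.subset_empty_iff.mp (hT ∅)
  | succ n ih =>
    by_cases hfix : IsFixedPt T S
    · rwa [iterate_fixed hfix]
    · have hlt : (T S).ncard < S.ncard := Set.ncard_lt_ncard ((hT S).ssubset_of_ne hfix) hS
      exact ih (hS.subset (hT S)) (by omega)

theorem exists_mem_periodicPts_of_mapsTo {g : α → α} {s : Set α} (hs : s.Finite)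
    (hne : s.Nonempty) (hg : Set.MapsTo g s s) : ∃ y ∈ s, y ∈ periodicPts g := by
  obtain ⟨a, ha⟩ := hne
  have horbit (k : ℕ) : g^[k] a ∈ s := hg.iterate k ha
  obtain ⟨i, j, hij, heq⟩ := hs.exists_lt_map_eq_of_forall_mem horbit
  refine ⟨g^[i] a, horbit i, mk_mem_periodicPts (Nat.sub_pos_of_lt hij) ?_⟩
  rw [IsPeriodicPt, IsFixedPt, ← iterate_add_apply, Nat.sub_add_cancel hij.le, heq]

theorem exists_cycle_of_forall_exists_rel {r : α → α → Prop} {s : Set α} (hs : s.Finite)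
    (hne : s.Nonempty) (hr : ∀ a ∈ s, ∃ b ∈ s, r a b) :
    ∃ (n : ℕ) (c : Fin (n + 1) → α), 0 < n ∧ Injective (fun i : Fin n => c i.castSucc) ∧
      c (Fin.last n) = c 0 ∧ ∀ i : Fin n, r (c i.castSucc) (c i.succ) := by
  choose! g hgs hgr using hr
  obtain ⟨y, hys, hy⟩ := exists_mem_periodicPts_of_mapsTo hs hne hgs
  refine ⟨minimalPeriod g y, fun i => g^[i] y, minimalPeriod_pos_of_mem_periodicPts hy,
    fun i j hij => Fin.ext (iterate_injOn_Iio_minimalPeriod i.2 j.2 hij),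
    iterate_minimalPeriod, fun i => ?_⟩
  simp only [Fin.val_castSucc, Fin.val_succ, iterate_succ_apply']
  exact hgr _ (Set.MapsTo.iterate hgs i hys)

end Iteration

theorem exists_rel_of_not_forall_ne_rel {α : Type*} {r : α → α → Prop} [Std.Trichotomous r]
    {a : α} {P : α → Prop} (h : ¬ ∀ b, b ≠ a → P b → r a b) :
    ∃ b, P b ∧ r b a := by
  push Not at h
  obtain ⟨b, hne, hb, hab⟩ := h
  exact ⟨b, hb, by_contra fun hba => hne (Std.Trichotomous.trichotomous b a hba hab)⟩

section Matching

variable {W F : Type*} {prefW : W → F → F → Prop} {prefF : F → W → W → Prop}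

theorem delta_subset (S : Set (W × F)) : delta prefW prefF S ⊆ S :=
  Set.sep_subset _ _

theorem isFixedPt_delta_normalForm [Fintype W] [Fintype F] :
    Function.IsFixedPt (delta prefW prefF) (NormalForm W F prefW prefF) :=
  isFixedPt_iterate_of_ncard_le delta_subset Set.finite_univ
    (by rw [Set.ncard_univ, Nat.card_eq_fintype_card])

variable [∀ w, Std.Trichotomous (prefW w)] [∀ f, Std.Trichotomous (prefF f)] {S : Set (W × F)}

theorem Arc.exists_arc_of_not_unattractive {u v : W × F} (huv : Arc prefW prefF S u v)
    (hu : ¬ Unattractive prefW prefF S u.1 u.2) : ∃ x, Arc prefW prefF S v x := by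
  obtain ⟨w, f⟩ := u
  obtain ⟨w₁, f₁⟩ := v
  obtain ⟨-, hv, ⟨rfl : w = w₁, hpref⟩ | ⟨rfl : f = f₁, hpref⟩⟩ := huv
  · obtain ⟨w', hw', hlt⟩ : ∃ w', (w', f₁) ∈ S ∧ prefF f₁ w' w :=
      exists_rel_of_not_forall_ne_rel fun hbest => hu (.inl ⟨f₁, hv, hpref, hbest⟩)
    exact ⟨(w', f₁), hv, hw', .inr ⟨rfl, hlt⟩⟩
  · obtain ⟨f', hf', hlt⟩ : ∃ f', (w₁, f') ∈ S ∧ prefW w₁ f' f :=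
      exists_rel_of_not_forall_ne_rel fun hbest => hu (.inr ⟨w₁, hv, hpref, hbest⟩)
    exact ⟨(w₁, f'), hv, hf', .inl ⟨rfl, hlt⟩⟩

theorem arc_or_arc_of_share {p q : W × F} (hp : p ∈ S) (hq : q ∈ S) (hne : p ≠ q)
    (hshare : p.1 = q.1 ∨ p.2 = q.2) : Arc prefW prefF S p q ∨ Arc prefW prefF S q p := by
  obtain ⟨w, f⟩ := p
  obtain ⟨w₁, f₁⟩ := q
  obtain (rfl : w = w₁) | (rfl : f = f₁) := hshare
  · obtain h | rfl | h := trichotomous_of (prefW w) f f₁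
    · exact .inr ⟨hq, hp, .inl ⟨rfl, h⟩⟩
    · exact absurd rfl hne
    · exact .inl ⟨hp, hq, .inl ⟨rfl, h⟩⟩
  · obtain h | rfl | h := trichotomous_of (prefF f) w w₁
    · exact .inr ⟨hq, hp, .inr ⟨rfl, h⟩⟩
    · exact absurd rfl hne
    · exact .inl ⟨hp, hq, .inr ⟨rfl, h⟩⟩

theorem Arc.hasDirectedCycle_of_isFixedPt_delta (hfin : S.Finite)
    (hS : Function.IsFixedPt (delta prefW prefF) S) {u v : W × F}
    (huv : Arc prefW prefF S u v) : HasDirectedCycle prefW prefF S := by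
  have hattractive : ∀ p ∈ S, ¬ Unattractive prefW prefF S p.1 p.2 := fun _ hp => (hS.ge hp).2
  refine exists_cycle_of_forall_exists_rel (s := {y | ∃ x, Arc prefW prefF S x y})
    (hfin.subset ?_) ⟨v, u, huv⟩ ?_
  · rintro y ⟨x, hxy⟩
    exact hxy.2.1
  · rintro y ⟨x, hxy⟩
    obtain ⟨z, hyz⟩ := hxy.exists_arc_of_not_unattractive (hattractive x hxy.1)
    exact ⟨z, ⟨y, hyz⟩, hyz⟩

theorem cycle_of_normalForm_share_general (hfin : S.Finite)
    (hS : Function.IsFixedPt (delta prefW prefF) S) {p q : W × F} (hp : p ∈ S) (hq : q ∈ S)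
    (hne : p ≠ q) (hshare : p.1 = q.1 ∨ p.2 = q.2) : HasDirectedCycle prefW prefF S :=
  (arc_or_arc_of_share hp hq hne hshare).elim
    (Arc.hasDirectedCycle_of_isFixedPt_delta hfin hS)
    (Arc.hasDirectedCycle_of_isFixedPt_delta hfin hS)

end Matching

/-- If the normal form contains two distinct pairs sharing a worker or a firm,
then `D(S*)` contains a directed cycle. -/
theorem cycle_of_normalForm_share {W F : Type*} [Fintype W] [Fintype F] [Nonempty W]
    (hcard : Fintype.card W = Fintype.card F)
    (prefW : W → F → F → Prop) (prefF : F → W → W → Prop)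
    (hW : ∀ w, IsStrictTotalOrder F (prefW w))
    (hF : ∀ f, IsStrictTotalOrder W (prefF f))
    (p q : W × F)
    (hp : p ∈ NormalForm W F prefW prefF) (hq : q ∈ NormalForm W F prefW prefF)
    (hne : p ≠ q) (hshare : p.1 = q.1 ∨ p.2 = q.2) :
    HasDirectedCycle prefW prefF (NormalForm W F prefW prefF) :=
  cycle_of_normalForm_share_general (Set.toFinite _) isFixedPt_delta_normalForm hp hq hne hshare
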